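/- Fix a real number c with 0 < c < 1 and set β₃ = (c√(1−c²) + √(3−8c+6c²−c⁴))/2. Then ψ₄(t,β₃) ≤ 0 for all t ∈ [−1,1], and for every ξ > 0 such that ψ₄(t,ξ) ≤ 0 for all t ∈ [−1,1], sup over t ∈ [−1,1] of |ψ₄(t,ξ)| is at least sup over t ∈ [−1,1] of |ψ₄(t,β₃)|; i.e., ξ∨ = β₃ induces the optimal inner quartic G² approximant. -/

import Mathlib

noncomputable def alpha1 (c : ℝ) : ℝ := -(Real.sqrt (1 - c^2)/2) * (Real.sqrt (3 + c^2) + c)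
noncomputable def alpha2 (c : ℝ) : ℝ := (Real.sqrt (1 - c^2)/2) * (Real.sqrt (3 + c^2) - c)
noncomputable def beta1 (c : ℝ) : ℝ :=
  (c*Real.sqrt (1 - c^2) - Real.sqrt (3 + 8*c + 6*c^2 - c^4))/2
noncomputable def beta2 (c : ℝ) : ℝ :=
  (c*Real.sqrt (1 - c^2) - Real.sqrt (3 - 8*c + 6*c^2 - c^4))/2
noncomputable def beta3 (c : ℝ) : ℝ :=
  (c*Real.sqrt (1 - c^2) + Real.sqrt (3 - 8*c + 6*c^2 - c^4))/2
noncomputable def beta4 (c : ℝ) : ℝ :=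
  (c*Real.sqrt (1 - c^2) + Real.sqrt (3 + 8*c + 6*c^2 - c^4))/2

/-- Simplified radial error of the quartic G² Bézier approximant of the unit circular arc. -/
noncomputable def psi4 (c t ξ : ℝ) : ℝ :=
  ((t^2 - 1)^3/(64*c^2)) *
    (16*(ξ - alpha1 c)^2*(ξ - alpha2 c)^2*t^2
      - 16*(ξ - beta1 c)*(ξ - beta2 c)*(ξ - beta3 c)*(ξ - beta4 c))

/-- Sup over `t ∈ [−1,1]` of `|f t|`. -/
noncomputable def errSup (f : ℝ → ℝ) : ℝ :=
  sSup ((fun t => |f t|) '' Set.Icc (-1 : ℝ) 1)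

/-!
Put `P(ξ) = (ξ - α₁)(ξ - α₂)` and `Q(ξ) = (ξ - β₂)(ξ - β₃)`. Since
`(ξ - β₁)(ξ - β₄) = Q(ξ) - 4c`,
`ψ₄(t, ξ) = -(1 - t²)³ / (4c²) · (P² t² - Q (Q - 4c))`.
At `ξ = β₃` the term with `Q` vanishes, so `|ψ₄(·, β₃)|` is a multiple of `(1 - t²)³ t²` and peaks
at `t = 1/2`. It therefore suffices to compare the errors of `β₃` and of another inner approximant
at `t = 1/2`, which amounts to `P(β₃)² ≤ P(ξ)² + 4 Q (4c - Q)`. The inner condition at `t = 0`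
says `0 ≤ Q (4c - Q)`, so this is clear for `ξ` between the two roots of `P(ξ) = P(β₃) ≤ 0`. To
the right of `β₃` one uses that `-P(β₃)` is small. To the left of the other root, `ξ` cannot go
below `β₁`, and the reflection `(c, ξ) ↦ (-c, -ξ)`, which preserves `P` and exchanges `β₁` with
`-β₃`, shows `-P(β₃) ≤ P(β₁)`.
-/

section

open Real Set

section ErrSup

variable {f : ℝ → ℝ}

lemma abs_le_errSup (hf : ContinuousOn f (Icc (-1) 1)) {t : ℝ} (ht : t ∈ Icc (-1 : ℝ) 1) :
    |f t| ≤ errSup f :=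
  le_csSup (isCompact_Icc.image_of_continuousOn hf.abs).bddAbove (mem_image_of_mem _ ht)

lemma errSup_le {M : ℝ} (h : ∀ t ∈ Icc (-1 : ℝ) 1, |f t| ≤ M) : errSup f ≤ M :=
  csSup_le ((nonempty_Icc.2 (by norm_num)).image _) (forall_mem_image.2 h)

end ErrSup

lemma one_sub_pow_three_mul_le (x : ℝ) : (1 - x) ^ 3 * x ≤ 27 / 256 := by
  have hfactor : 27 / 256 - (1 - x) ^ 3 * x = (x - 1 / 4) ^ 2 * ((x - 5 / 4) ^ 2 + 1 / 8) := by
    ring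
  rw [← sub_nonneg, hfactor]
  positivity

lemma exp_neg_arcosh {x : ℝ} (hx : 1 ≤ x) : exp (-arcosh x) = x - √(x ^ 2 - 1) := by
  rw [← cosh_sub_sinh, cosh_arcosh hx, sinh_arcosh hx]

lemma exp_neg_arcosh_le_inv {x : ℝ} (hx : 1 ≤ x) : exp (-arcosh x) ≤ x⁻¹ := by
  rw [exp_neg, exp_arcosh hx]
  gcongr
  exact le_add_of_nonneg_right (sqrt_nonneg _)

/-- The quadratic `P(ξ) = (ξ - α₁)(ξ - α₂)`, whose square multiplies `t²` in `ψ₄`. -/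
noncomputable def alphaQuad (c ξ : ℝ) : ℝ := (ξ - alpha1 c) * (ξ - alpha2 c)

/-- The quadratic `Q(ξ) = (ξ - β₂)(ξ - β₃)`; the complementary product `(ξ - β₁)(ξ - β₄)` is
obtained from it by the reflection `(c, ξ) ↦ (-c, -ξ)`. -/
noncomputable def betaQuad (c ξ : ℝ) : ℝ := (ξ - beta2 c) * (ξ - beta3 c)

/-- Half the chord of the unit circular arc with half-angle `arccos c`. -/
noncomputable def halfChord (c : ℝ) : ℝ := √(1 - c ^ 2)

/-- The gap `β₃ - β₂` between the two roots of `betaQuad`. -/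
noncomputable def betaGap (c : ℝ) : ℝ := √(3 - 8 * c + 6 * c ^ 2 - c ^ 4)

/-- The value of `alphaQuad` at `β₃` divided by `-c`, in a form that shows how it depends on `c`. -/
noncomputable def betaDefect (c : ℝ) : ℝ := (1 - c) ^ 2 * exp (-arcosh (2 + c))

variable {c ξ : ℝ}

lemma halfChord_nonneg (c : ℝ) : 0 ≤ halfChord c := sqrt_nonneg _

lemma betaGap_nonneg (c : ℝ) : 0 ≤ betaGap c := sqrt_nonneg _

lemma one_sub_sq_nonneg (hc : |c| ≤ 1) : 0 ≤ 1 - c ^ 2 :=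
  sub_nonneg.2 ((sq_le_one_iff_abs_le_one c).2 hc)

lemma sq_halfChord (hc : |c| ≤ 1) : halfChord c ^ 2 = 1 - c ^ 2 := sq_sqrt (one_sub_sq_nonneg hc)

lemma betaGap_eq_sqrt (c : ℝ) : betaGap c = √((1 - c) ^ 3 * (3 + c)) := by
  rw [betaGap]; ring_nf

lemma sq_betaGap (hc : |c| ≤ 1) : betaGap c ^ 2 = (1 - c) ^ 3 * (3 + c) := by
  obtain ⟨hc₁, hc₂⟩ := abs_le.1 hc
  rw [betaGap_eq_sqrt]
  exact sq_sqrt (mul_nonneg (pow_nonneg (by linarith) 3) (by linarith))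

lemma halfChord_mul_betaGap (hc : |c| ≤ 1) :
    halfChord c * betaGap c = (1 - c) ^ 2 * √((2 + c) ^ 2 - 1) := by
  rw [halfChord, betaGap_eq_sqrt, ← sqrt_mul (one_sub_sq_nonneg hc),
    show (1 - c ^ 2) * ((1 - c) ^ 3 * (3 + c)) = ((1 - c) ^ 2) ^ 2 * ((2 + c) ^ 2 - 1) by ring,
    sqrt_mul (by positivity), sqrt_sq (by positivity)]

lemma beta2_eq (c : ℝ) : beta2 c = (c * halfChord c - betaGap c) / 2 := rfl

lemma beta3_eq (c : ℝ) : beta3 c = (c * halfChord c + betaGap c) / 2 := rfl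

lemma beta2_le_beta3 (c : ℝ) : beta2 c ≤ beta3 c := by
  linarith [beta2_eq c, beta3_eq c, betaGap_nonneg c]

lemma beta3_nonneg (hc : 0 ≤ c) : 0 ≤ beta3 c := by
  linarith [beta3_eq c, mul_nonneg hc (halfChord_nonneg c), betaGap_nonneg c]

lemma beta2_neg (c : ℝ) : beta2 (-c) = -beta4 c := by
  rw [beta2, beta4]; ring_nf

lemma beta3_neg (c : ℝ) : beta3 (-c) = -beta1 c := by
  rw [beta3, beta1]; ring_nf

lemma alphaQuad_neg_neg (c ξ : ℝ) : alphaQuad (-c) (-ξ) = alphaQuad c ξ := by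
  simp only [alphaQuad, alpha1, alpha2, neg_sq]
  ring

lemma alphaQuad_eq (hc : |c| ≤ 1) (ξ : ℝ) :
    alphaQuad c ξ = ξ ^ 2 + c * halfChord c * ξ - 3 * (1 - c ^ 2) / 4 := by
  have hsqrt : √(3 + c ^ 2) ^ 2 = 3 + c ^ 2 := sq_sqrt (by positivity)
  rw [alphaQuad, alpha1, alpha2, ← halfChord]
  linear_combination (-halfChord c ^ 2 / 4) * hsqrt - 3 / 4 * sq_halfChord hc

lemma alphaQuad_sub_alphaQuad (c ξ η : ℝ) :
    alphaQuad c ξ - alphaQuad c η = (ξ - η) * (ξ + η + c * halfChord c) := by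
  rw [alphaQuad, alphaQuad, alpha1, alpha2, ← halfChord]
  ring

lemma betaQuad_eq_mul_add_betaGap (c ξ : ℝ) :
    betaQuad c ξ = (ξ - beta3 c) * (ξ - beta3 c + betaGap c) := by
  rw [betaQuad, beta2_eq, beta3_eq]
  ring

lemma betaQuad_eq_alphaQuad_sub (c ξ : ℝ) :
    betaQuad c ξ =
      alphaQuad c ξ - alphaQuad c (beta3 c) - 2 * c * halfChord c * (ξ - beta3 c) := by
  rw [alphaQuad_sub_alphaQuad, betaQuad, beta2_eq, beta3_eq]
  ring

lemma betaQuad_neg_neg (hc : |c| ≤ 1) (ξ : ℝ) : betaQuad (-c) (-ξ) = betaQuad c ξ - 4 * c := by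
  have hexpand {a : ℝ} (ha : |a| ≤ 1) (η : ℝ) :
      betaQuad a η = η ^ 2 - a * halfChord a * η - (1 - a) * (3 - 5 * a) / 4 := by
    rw [betaQuad, beta2_eq, beta3_eq]
    linear_combination (a ^ 2 / 4) * sq_halfChord ha - (1 / 4) * sq_betaGap ha
  have hchord : halfChord (-c) = halfChord c := by rw [halfChord, halfChord, neg_sq]
  rw [hexpand hc, hexpand (by rwa [abs_neg]), hchord]
  ring

lemma betaQuad_beta3 (c : ℝ) : betaQuad c (beta3 c) = 0 := by
  rw [betaQuad, sub_self, mul_zero]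

lemma betaQuad_beta1 (hc : |c| ≤ 1) : betaQuad c (beta1 c) = 4 * c := by
  have h := betaQuad_neg_neg hc (beta1 c)
  rw [← beta3_neg, betaQuad_beta3] at h
  linarith

lemma le_beta3_of_betaQuad_nonpos (h : betaQuad c ξ ≤ 0) : ξ ≤ beta3 c := by
  by_contra! hlt
  exact h.not_gt (mul_pos (sub_pos.2 ((beta2_le_beta3 c).trans_lt hlt)) (sub_pos.2 hlt))

lemma beta1_le_of_betaQuad_le (hc : |c| ≤ 1) (h : betaQuad c ξ ≤ 4 * c) : beta1 c ≤ ξ := by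
  have hreflected : -ξ ≤ beta3 (-c) :=
    le_beta3_of_betaQuad_nonpos (by rw [betaQuad_neg_neg hc]; linarith)
  rw [beta3_neg] at hreflected
  exact neg_le_neg_iff.1 hreflected

lemma betaDefect_nonneg (c : ℝ) : 0 ≤ betaDefect c :=
  mul_nonneg (sq_nonneg _) (exp_pos _).le

lemma antitoneOn_betaDefect : AntitoneOn betaDefect (Icc (-1) 1) := by
  rintro a ⟨ha, -⟩ b ⟨-, hb⟩ hab
  have harcosh : arcosh (2 + a) ≤ arcosh (2 + b) :=
    (arcosh_le_arcosh (by linarith) (by linarith)).2 (by linarith)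
  have hone_sub : 0 ≤ 1 - b := sub_nonneg.2 hb
  unfold betaDefect
  gcongr

lemma betaDefect_le (hc : 0 ≤ c) : betaDefect c ≤ (1 - c) ^ 2 / 2 := by
  have hexp : exp (-arcosh (2 + c)) ≤ 2⁻¹ :=
    (exp_neg_arcosh_le_inv (by linarith)).trans (by gcongr; linarith)
  exact mul_le_mul_of_nonneg_left hexp (sq_nonneg _)

lemma alphaQuad_beta3 (hc : |c| ≤ 1) : alphaQuad c (beta3 c) = -(c * betaDefect c) := by
  rw [alphaQuad_eq hc, beta3_eq, betaDefect, exp_neg_arcosh (by linarith [(abs_le.1 hc).1])]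
  linear_combination (3 / 4 * c ^ 2) * sq_halfChord hc + (1 / 4) * sq_betaGap hc +
    c * halfChord_mul_betaGap hc

lemma alphaQuad_beta1 (hc : |c| ≤ 1) : alphaQuad c (beta1 c) = c * betaDefect (-c) := by
  rw [← alphaQuad_neg_neg, ← beta3_neg, alphaQuad_beta3 (by rwa [abs_neg])]
  ring

lemma two_mul_betaDefect_mul_halfChord_le (hc₀ : 0 ≤ c) (hc₁ : c ≤ 1) :
    2 * (c * betaDefect c) * halfChord c ≤ betaGap c := by
  have hchord := halfChord_nonneg c
  have hsub : 0 ≤ 1 - c := sub_nonneg.2 hc₁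
  calc 2 * (c * betaDefect c) * halfChord c
      ≤ 2 * (1 * ((1 - c) ^ 2 / 2)) * halfChord c := by
        gcongr
        · exact betaDefect_nonneg c
        · exact betaDefect_le hc₀
    _ = (1 - c) ^ 2 * halfChord c := by ring
    _ ≤ betaGap c := by
      rw [betaGap_eq_sqrt]
      refine le_sqrt_of_sq_le ?_
      rw [mul_pow, sq_halfChord (abs_le.2 ⟨by linarith, hc₁⟩)]
      calc ((1 - c) ^ 2) ^ 2 * (1 - c ^ 2) = (1 - c) ^ 3 * ((1 - c) ^ 2 * (1 + c)) := by ring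
        _ ≤ (1 - c) ^ 3 * (3 + c) := by
          gcongr
          nlinarith

/-- The error `-ψ₄(1/2, ξ)` without its factor `27 / (1024 c²)`. -/
noncomputable def midError (c ξ : ℝ) : ℝ :=
  alphaQuad c ξ ^ 2 - 4 * (betaQuad c ξ * (betaQuad c ξ - 4 * c))

lemma midError_beta3 (c : ℝ) : midError c (beta3 c) = alphaQuad c (beta3 c) ^ 2 := by
  rw [midError, betaQuad_beta3]
  ring

lemma midError_beta3_le_iff (hc : |c| ≤ 1) (ξ : ℝ) :
    midError c (beta3 c) ≤ midError c ξ ↔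
      2 * (c * betaDefect c) * (alphaQuad c ξ - alphaQuad c (beta3 c)) ≤
        (alphaQuad c ξ - alphaQuad c (beta3 c)) ^ 2 +
          4 * (betaQuad c ξ * (4 * c - betaQuad c ξ)) := by
  have hsub : midError c ξ - midError c (beta3 c) =
      (alphaQuad c ξ - alphaQuad c (beta3 c)) ^ 2 +
        4 * (betaQuad c ξ * (4 * c - betaQuad c ξ)) -
        2 * (c * betaDefect c) * (alphaQuad c ξ - alphaQuad c (beta3 c)) := by
    rw [midError_beta3, midError, alphaQuad_beta3 hc]
    ring
  rw [← sub_nonneg, hsub, sub_nonneg]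

lemma midError_beta3_le_of_beta3_le (hc₀ : 0 ≤ c) (hc₁ : c ≤ 1) (hξ : beta3 c ≤ ξ)
    (hQ : betaQuad c ξ ≤ 4 * c) : midError c (beta3 c) ≤ midError c ξ := by
  have hh : 0 ≤ ξ - beta3 c := sub_nonneg.2 hξ
  have hgap := betaGap_nonneg c
  have hQ₀ : 0 ≤ betaQuad c ξ := by rw [betaQuad_eq_mul_add_betaGap]; positivity
  have hgap_le : betaGap c * (ξ - beta3 c) ≤ betaQuad c ξ := by
    rw [betaQuad_eq_mul_add_betaGap]; nlinarith
  have hw : alphaQuad c ξ - alphaQuad c (beta3 c) =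
      betaQuad c ξ + 2 * c * halfChord c * (ξ - beta3 c) := by
    linarith [betaQuad_eq_alphaQuad_sub c ξ]
  have hw_ge : betaQuad c ξ ≤ alphaQuad c ξ - alphaQuad c (beta3 c) := by
    have hchord := halfChord_nonneg c
    rw [hw]
    exact le_add_of_nonneg_right (by positivity)
  have hdefect : 2 * (c * betaDefect c) ≤ c := by
    have hhalf : betaDefect c ≤ 1 / 2 := (betaDefect_le hc₀).trans (by nlinarith)
    nlinarith
  rw [midError_beta3_le_iff (abs_le.2 ⟨by linarith, hc₁⟩)]
  calc 2 * (c * betaDefect c) * (alphaQuad c ξ - alphaQuad c (beta3 c))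
      = 2 * (c * betaDefect c) * betaQuad c ξ +
          2 * c * (2 * (c * betaDefect c) * halfChord c * (ξ - beta3 c)) := by rw [hw]; ring
    _ ≤ c * betaQuad c ξ + 2 * c * (betaGap c * (ξ - beta3 c)) := by
      gcongr
      exact two_mul_betaDefect_mul_halfChord_le hc₀ hc₁
    _ ≤ c * betaQuad c ξ + 2 * c * betaQuad c ξ := by gcongr
    _ ≤ betaQuad c ξ ^ 2 + 4 * (betaQuad c ξ * (4 * c - betaQuad c ξ)) := by
      nlinarith [mul_nonneg hQ₀ (sub_nonneg.2 hQ), mul_nonneg hc₀ hQ₀]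
    _ ≤ (alphaQuad c ξ - alphaQuad c (beta3 c)) ^ 2 +
          4 * (betaQuad c ξ * (4 * c - betaQuad c ξ)) := by gcongr

lemma midError_beta3_le_of_le_neg_beta3 (hc₀ : 0 ≤ c) (hc₁ : c ≤ 1)
    (hξ : ξ ≤ -beta3 c - c * halfChord c) (hQ : betaQuad c ξ ≤ 4 * c) :
    midError c (beta3 c) ≤ midError c ξ := by
  have hc : |c| ≤ 1 := abs_le.2 ⟨by linarith, hc₁⟩
  have hchord : 0 ≤ c * halfChord c := mul_nonneg hc₀ (halfChord_nonneg c)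
  have hξβ : ξ ≤ beta3 c := by linarith [beta3_nonneg hc₀]
  have hw₀ : 0 ≤ alphaQuad c ξ - alphaQuad c (beta3 c) := by
    rw [alphaQuad_sub_alphaQuad]
    exact mul_nonneg_of_nonpos_of_nonpos (by linarith) (by linarith)
  have hQ_eq := betaQuad_eq_alphaQuad_sub c ξ
  have hw_le : alphaQuad c ξ - alphaQuad c (beta3 c) ≤ betaQuad c ξ := by nlinarith
  have hbeta1 : 2 * (c * betaDefect c) ≤ alphaQuad c (beta1 c) - alphaQuad c (beta3 c) := by
    have hdefect : betaDefect c ≤ betaDefect (-c) :=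
      antitoneOn_betaDefect ⟨by linarith, by linarith⟩ ⟨by linarith, hc₁⟩ (by linarith)
    rw [alphaQuad_beta1 hc, alphaQuad_beta3 hc]
    nlinarith
  have hslack : 2 * (c * betaDefect c) - (alphaQuad c ξ - alphaQuad c (beta3 c)) ≤
      4 * c - betaQuad c ξ := by
    have hQ_beta1 := betaQuad_eq_alphaQuad_sub c (beta1 c)
    rw [betaQuad_beta1 hc] at hQ_beta1
    nlinarith [mul_le_mul_of_nonneg_left (beta1_le_of_betaQuad_le hc hQ) hchord]
  have hQ_mul : 0 ≤ betaQuad c ξ * (4 * c - betaQuad c ξ) :=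
    mul_nonneg (hw₀.trans hw_le) (sub_nonneg.2 hQ)
  have hw_mul := calc
    (alphaQuad c ξ - alphaQuad c (beta3 c)) *
        (2 * (c * betaDefect c) - (alphaQuad c ξ - alphaQuad c (beta3 c)))
      ≤ (alphaQuad c ξ - alphaQuad c (beta3 c)) * (4 * c - betaQuad c ξ) :=
        mul_le_mul_of_nonneg_left hslack hw₀
    _ ≤ betaQuad c ξ * (4 * c - betaQuad c ξ) :=
        mul_le_mul_of_nonneg_right hw_le (sub_nonneg.2 hQ)
  rw [midError_beta3_le_iff hc]
  linarith

lemma midError_beta3_le (hc₀ : 0 ≤ c) (hc₁ : c ≤ 1)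
    (hinner : betaQuad c ξ * (betaQuad c ξ - 4 * c) ≤ 0) :
    midError c (beta3 c) ≤ midError c ξ := by
  have hQ : betaQuad c ξ ≤ 4 * c := by
    by_contra! hlt
    exact hinner.not_gt (mul_pos (by linarith) (sub_pos.2 hlt))
  rcases le_total (beta3 c) ξ with hright | hξβ
  · exact midError_beta3_le_of_beta3_le hc₀ hc₁ hright hQ
  rcases le_total ξ (-beta3 c - c * halfChord c) with hleft | hmiddle
  · exact midError_beta3_le_of_le_neg_beta3 hc₀ hc₁ hleft hQ
  have hw : alphaQuad c ξ - alphaQuad c (beta3 c) ≤ 0 := by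
    rw [alphaQuad_sub_alphaQuad]
    exact mul_nonpos_of_nonpos_of_nonneg (by linarith) (by linarith)
  rw [midError_beta3_le_iff (abs_le.2 ⟨by linarith, hc₁⟩)]
  nlinarith [mul_nonneg hc₀ (betaDefect_nonneg c)]

lemma psi4_eq (hc : |c| ≤ 1) (t ξ : ℝ) :
    psi4 c t ξ = -((1 - t ^ 2) ^ 3 / (4 * c ^ 2) *
      (alphaQuad c ξ ^ 2 * t ^ 2 - betaQuad c ξ * (betaQuad c ξ - 4 * c))) := by
  rw [← betaQuad_neg_neg hc, psi4, alphaQuad, betaQuad, betaQuad, beta2_neg, beta3_neg]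
  ring

lemma continuous_psi4 (c ξ : ℝ) : Continuous fun t => psi4 c t ξ := by
  unfold psi4
  fun_prop

lemma psi4_beta3 (hc : |c| ≤ 1) (t : ℝ) :
    psi4 c t (beta3 c) =
      -((1 - t ^ 2) ^ 3 * t ^ 2 / (4 * c ^ 2) * midError c (beta3 c)) := by
  rw [psi4_eq hc, midError_beta3, betaQuad_beta3]
  ring

lemma psi4_one_half (hc : |c| ≤ 1) (ξ : ℝ) :
    psi4 c (1 / 2) ξ = -(27 / 256 / (4 * c ^ 2) * midError c ξ) := by
  rw [psi4_eq hc, midError]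
  ring

lemma midError_beta3_nonneg (c : ℝ) : 0 ≤ midError c (beta3 c) := by
  rw [midError_beta3]
  exact sq_nonneg _

lemma psi4_beta3_nonpos (hc : |c| ≤ 1) {t : ℝ} (ht : t ∈ Icc (-1 : ℝ) 1) :
    psi4 c t (beta3 c) ≤ 0 := by
  have ht' : 0 ≤ 1 - t ^ 2 := one_sub_sq_nonneg (abs_le.2 ht)
  have herr := midError_beta3_nonneg c
  rw [psi4_beta3 hc, neg_nonpos]
  positivity

lemma errSup_psi4_beta3_le (hc : |c| ≤ 1) :
    errSup (fun t => psi4 c t (beta3 c)) ≤ 27 / 256 / (4 * c ^ 2) * midError c (beta3 c) := by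
  refine errSup_le fun t ht => ?_
  rw [abs_of_nonpos (psi4_beta3_nonpos hc ht), psi4_beta3 hc, neg_neg]
  gcongr
  · exact midError_beta3_nonneg c
  · exact one_sub_pow_three_mul_le (t ^ 2)

lemma le_errSup_psi4 (hc : |c| ≤ 1) (ξ : ℝ) :
    27 / 256 / (4 * c ^ 2) * midError c ξ ≤ errSup (fun t => psi4 c t ξ) := by
  have habs := abs_le_errSup (continuous_psi4 c ξ).continuousOn (t := 1 / 2) (by norm_num)
  rw [psi4_one_half hc, abs_neg] at habs
  exact (le_abs_self _).trans habs

lemma betaQuad_mul_nonpos_of_psi4_zero_nonpos (hc₀ : c ≠ 0) (hc : |c| ≤ 1)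
    (h : psi4 c 0 ξ ≤ 0) : betaQuad c ξ * (betaQuad c ξ - 4 * c) ≤ 0 := by
  have hpsi : psi4 c 0 ξ = betaQuad c ξ * (betaQuad c ξ - 4 * c) / (4 * c ^ 2) := by
    rw [psi4_eq hc]
    ring
  rw [hpsi] at h
  by_contra! hpos
  exact h.not_gt (by positivity)

theorem stmt_9_general (hc₀ : 0 < c) (hc₁ : c ≤ 1) :
    (∀ t ∈ Icc (-1 : ℝ) 1, psi4 c t (beta3 c) ≤ 0) ∧
    ∀ ξ : ℝ, (∀ t ∈ Icc (-1 : ℝ) 1, psi4 c t ξ ≤ 0) →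
      errSup (fun t => psi4 c t (beta3 c)) ≤ errSup (fun t => psi4 c t ξ) := by
  have hc : |c| ≤ 1 := abs_le.2 ⟨by linarith, hc₁⟩
  refine ⟨fun t ht => psi4_beta3_nonpos hc ht, fun ξ hinner => ?_⟩
  have hQ : betaQuad c ξ * (betaQuad c ξ - 4 * c) ≤ 0 :=
    betaQuad_mul_nonpos_of_psi4_zero_nonpos hc₀.ne' hc (hinner 0 (by norm_num))
  calc errSup (fun t => psi4 c t (beta3 c))
      ≤ 27 / 256 / (4 * c ^ 2) * midError c (beta3 c) := errSup_psi4_beta3_le hc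
    _ ≤ 27 / 256 / (4 * c ^ 2) * midError c ξ := by
      gcongr
      exact midError_beta3_le hc₀.le hc₁ hQ
    _ ≤ errSup (fun t => psi4 c t ξ) := le_errSup_psi4 hc ξ

end

/-- `ξ∨ = β₃` induces the optimal inner quartic G² approximant. -/
theorem stmt_9 (c : ℝ) (hc0 : 0 < c) (hc1 : c < 1) :
    (∀ t ∈ Set.Icc (-1 : ℝ) 1, psi4 c t (beta3 c) ≤ 0) ∧
    ∀ ξ > (0 : ℝ), (∀ t ∈ Set.Icc (-1 : ℝ) 1, psi4 c t ξ ≤ 0) →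
      errSup (fun t => psi4 c t (beta3 c)) ≤ errSup (fun t => psi4 c t ξ) := by
  obtain ⟨hbeta3, hoptimal⟩ := stmt_9_general hc0 hc1.le
  exact ⟨hbeta3, fun ξ _ hinner => hoptimal ξ hinner⟩
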